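/- Let G be a simple graph on vertex set V = {0,...,n-1} with edge weights wt : E(G) → ℝ≥0, let k ≥ 1, and let H be a universal family of functions from V to {0,...,4k²-1}. If G contains a k-matching, then for at least half of the functions f ∈ H (i.e., for a set of functions of cardinality at least |H|/2), Red-Com(G,f) contains a k-matching whose weight equals the maximum weight of a k-matching of G. -/

import Mathlib

open Finset
open Classical

/-- An edge is a pair `(u, v)` of vertices with `u < v`.  A set `M` of edges
is a matching if no two distinct edges of `M` share an endpoint. -/
def IsMatchingE (M : Finset (ℕ × ℕ)) : Prop :=
  ∀ e ∈ M, ∀ e' ∈ M, e ≠ e' →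
    e.1 ≠ e'.1 ∧ e.1 ≠ e'.2 ∧ e.2 ≠ e'.1 ∧ e.2 ≠ e'.2

/-- `M` is a `k`-matching of the graph with edge set `H`. -/
def IsKMatchingE (H M : Finset (ℕ × ℕ)) (k : ℕ) : Prop :=
  M ⊆ H ∧ M.card = k ∧ IsMatchingE M

/-- The weight of a set of edges. -/
noncomputable def mweight (wt : ℕ × ℕ → ℝ) (M : Finset (ℕ × ℕ)) : ℝ :=
  ∑ e ∈ M, wt e

/-- The set of vertices covered by a set of edges. -/
def coveredE (M : Finset (ℕ × ℕ)) : Set ℕ := {v | ∃ e ∈ M, v = e.1 ∨ v = e.2}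

/-- A matching is nice w.r.t. `f` if no two covered vertices lie in the same
part (preimage of a value of `f`). -/
def NiceE (f : ℕ → ℕ) (M : Finset (ℕ × ℕ)) : Prop := Set.InjOn f (coveredE M)

/-- The strict order `≺` on edges: `e ≺ e'` iff `β e = (wt e, e.1, e.2)` is
lexicographically smaller than `β e'`. -/
def edgeLT (wt : ℕ × ℕ → ℝ) (e e' : ℕ × ℕ) : Prop :=
  wt e < wt e' ∨ (wt e = wt e' ∧ (e.1 < e'.1 ∨ (e.1 = e'.1 ∧ e.2 < e'.2)))

/-- `CompactG wt f H` : the subgraph of `H` consisting of every edge whose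
endpoints lie in distinct parts of `f` and whose `β`-value is maximum among
the edges of `H` between those two parts. -/
noncomputable def CompactG (wt : ℕ × ℕ → ℝ) (f : ℕ → ℕ)
    (H : Finset (ℕ × ℕ)) : Finset (ℕ × ℕ) :=
  H.filter (fun e => f e.1 ≠ f e.2 ∧
    ∀ e' ∈ H, ({f e'.1, f e'.2} : Finset ℕ) = {f e.1, f e.2} → ¬ edgeLT wt e e')

/-- `RedComG wt f k H` : from `CompactG wt f H` keep each edge that is among
the `8k` `β`-heaviest edges incident to (vertices of) the part of each of its
endpoints, and then keep only the `q = k(16k-1)` `β`-heaviest of those. -/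
noncomputable def RedComG (wt : ℕ × ℕ → ℝ) (f : ℕ → ℕ) (k : ℕ)
    (H : Finset (ℕ × ℕ)) : Finset (ℕ × ℕ) :=
  let C := CompactG wt f H
  let R1 := C.filter (fun e =>
    (C.filter (fun e' => (f e'.1 = f e.1 ∨ f e'.2 = f e.1) ∧
      edgeLT wt e e')).card < 8 * k ∧
    (C.filter (fun e' => (f e'.1 = f e.2 ∨ f e'.2 = f e.2) ∧
      edgeLT wt e e')).card < 8 * k)
  R1.filter (fun e => (R1.filter (fun e' => edgeLT wt e e')).card < k * (16 * k - 1))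

/-!
Order edges by the key `β e = (wt e, e.1, e.2)` in the lexicographic ordered monoid `ℝ × ℕ × ℕ`,
and, for a fixed `f`, let `M` maximize `∑ e ∈ M, β e` among the `k`-matchings whose `2k` endpoints
lie in pairwise distinct parts. By cancellation, any edge `e' ≻ e` with `e ∈ M` must touch one of
the at most `2(k - 1)` parts met by `M \ {e}`, for otherwise `M \ {e} ∪ {e'}` would have a larger
key. Each truncation in `RedComG` removes an edge only when there are too many heavier ones, and
this bound on where the heavier edges lie leaves too few of them, so `M ⊆ RedComG wt f k G`. The
first coordinate of `∑ e ∈ M, β e` is the weight of `M`, so `M` is as heavy as a given `k`-matching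
of `G` as soon as `f` is injective on the vertices of the latter. A union bound over the pairs of
vertices of one heaviest `k`-matching shows that at least half of the functions are.
-/

section PartMatching

variable {α β : Type*} [DecidableEq β]

/-- The set of parts of `f` met by the edge `e`. -/
def edgeParts (f : α → β) (e : α × α) : Finset β :=
  {f e.1, f e.2}

/-- The set of parts of `f` met by the edges of `M`. -/
def touchedParts (f : α → β) (M : Finset (α × α)) : Finset β :=
  M.biUnion (edgeParts f)

/-- `M` is a part matching for `f` if its image in the graph obtained by contracting every part
of `f` is a matching without loops, i.e. the endpoints of its edges lie in pairwise distinct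
parts. -/
def IsPartMatching (f : α → β) (M : Finset (α × α)) : Prop :=
  (∀ e ∈ M, f e.1 ≠ f e.2) ∧ (M : Set (α × α)).PairwiseDisjoint (edgeParts f)

variable {f : α → β} {M N T : Finset (α × α)} {P : Finset β} {e : α × α} {p : β}

theorem mem_edgeParts : p ∈ edgeParts f e ↔ p = f e.1 ∨ p = f e.2 := by
  simp only [edgeParts, mem_insert, mem_singleton]

theorem mem_touchedParts : p ∈ touchedParts f M ↔ ∃ e ∈ M, p ∈ edgeParts f e :=
  mem_biUnion

theorem disjoint_touchedParts_iff :
    Disjoint P (touchedParts f M) ↔ ∀ e ∈ M, Disjoint P (edgeParts f e) :=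
  disjoint_biUnion_right P M (edgeParts f)

theorem card_touchedParts_le (f : α → β) (M : Finset (α × α)) :
    #(touchedParts f M) ≤ 2 * #M :=
  (card_biUnion_le_card_mul M (edgeParts f) 2 fun _ _ => card_le_two).trans_eq (mul_comm _ _)

theorem edgeParts_eq_pair {q : β} (hp : p ∈ edgeParts f e) (hq : q ∈ edgeParts f e)
    (hpq : p ≠ q) : edgeParts f e = {p, q} := by
  rw [mem_edgeParts] at hp hq
  rcases hp with rfl | rfl <;> rcases hq with rfl | rfl
  exacts [absurd rfl hpq, rfl, pair_comm _ _, absurd rfl hpq]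

theorem ne_of_edgeParts_eq {e' : α × α} (h : edgeParts f e' = edgeParts f e)
    (he : f e.1 ≠ f e.2) : f e'.1 ≠ f e'.2 := by
  rw [← card_pair_eq_two_iff] at he ⊢
  exact (congrArg card h).trans he

/-- An edge through `p` that meets a part `q ≠ p` meets exactly `p` and `q`. -/
theorem card_le_of_forall_mem_edgeParts (hinj : Set.InjOn (edgeParts f) T)
    (hp : ∀ e ∈ T, p ∈ edgeParts f e) (hpP : p ∉ P)
    (hP : ∀ e ∈ T, ¬ Disjoint (edgeParts f e) P) : #T ≤ #P := by
  have hsub : T.image (edgeParts f) ⊆ P.image fun q => {p, q} := by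
    intro s hs
    obtain ⟨e, he, rfl⟩ := mem_image.1 hs
    obtain ⟨q, hqe, hqP⟩ := not_disjoint_iff.1 (hP e he)
    exact mem_image.2 ⟨q, hqP, (edgeParts_eq_pair (hp e he) hqe fun h => hpP (h ▸ hqP)).symm⟩
  calc #T = #(T.image (edgeParts f)) := (card_image_of_injOn hinj).symm
    _ ≤ #(P.image fun q => {p, q}) := card_le_card hsub
    _ ≤ #P := card_image_le

namespace IsPartMatching

theorem mono (hM : IsPartMatching f M) (hNM : N ⊆ M) : IsPartMatching f N :=
  ⟨fun e he => hM.1 e (hNM he), hM.2.subset hNM⟩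

variable [DecidableEq α]

theorem insert (hM : IsPartMatching f M) (he : f e.1 ≠ f e.2)
    (hdisj : Disjoint (edgeParts f e) (touchedParts f M)) :
    IsPartMatching f (insert e M) := by
  refine ⟨forall_mem_insert _ _ _ |>.2 ⟨he, hM.1⟩, ?_⟩
  rw [coe_insert]
  exact hM.2.insert fun e' he' _ => disjoint_touchedParts_iff.1 hdisj e' he'

theorem disjoint_touchedParts_erase (hM : IsPartMatching f M) (he : e ∈ M) :
    Disjoint (edgeParts f e) (touchedParts f (M.erase e)) :=
  disjoint_touchedParts_iff.2 fun _ he' =>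
    hM.2 he (mem_of_mem_erase he') (ne_of_mem_erase he').symm

end IsPartMatching

end PartMatching

section Truncation

variable {α β ι Γ : Type*} [DecidableEq β] [LinearOrder Γ]

/-- The elements of `C` of the `m` largest keys, i.e. those with fewer than `m` elements of `C`
above them. -/
def heaviest (κ : ι → Γ) (m : ℕ) (C : Finset ι) : Finset ι :=
  {e ∈ C | #{e' ∈ C | κ e < κ e'} < m}

/-- The edges of `C` that are, for both parts they meet, among the `m` heaviest edges of `C`
meeting that part. -/
def heaviestPerPart (κ : α × α → Γ) (f : α → β) (m : ℕ) (C : Finset (α × α)) : Finset (α × α) :=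
  {e ∈ C | ∀ p ∈ edgeParts f e, #{e' ∈ C | p ∈ edgeParts f e' ∧ κ e < κ e'} < m}

theorem card_le_of_forall_card_lt {κ : ι → Γ} {m : ℕ} {S : Finset ι} (hκ : Set.InjOn κ S)
    (h : ∀ e ∈ S, #{e' ∈ S | κ e < κ e'} < m) : #S ≤ m := by
  rcases S.eq_empty_or_nonempty with rfl | hS
  · exact Nat.zero_le m
  obtain ⟨e, he, hmin⟩ := exists_min_image S κ hS
  have hsub : S.erase e ⊆ {e' ∈ S | κ e < κ e'} := fun e' he' => by
    obtain ⟨hne, he'⟩ := mem_erase.1 he'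
    exact mem_filter.2 ⟨he', (hmin e' he').lt_of_ne fun h => hne (hκ he' he h.symm)⟩
  calc #S = #(S.erase e) + 1 := (card_erase_add_one he).symm
    _ ≤ #{e' ∈ S | κ e < κ e'} + 1 := Nat.add_le_add_right (card_le_card hsub) 1
    _ ≤ m := h e he

variable {κ : α × α → Γ}

theorem card_filter_mem_edgeParts_heaviestPerPart_le (hκ : Function.Injective κ) (f : α → β)
    (m : ℕ) (C : Finset (α × α)) (p : β) :
    #{e ∈ heaviestPerPart κ f m C | p ∈ edgeParts f e} ≤ m := by
  refine card_le_of_forall_card_lt hκ.injOn fun e he => ?_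
  obtain ⟨he, hpe⟩ := mem_filter.1 he
  refine (card_le_card ?_).trans_lt ((mem_filter.1 he).2 p hpe)
  rw [filter_filter]
  exact filter_subset_filter _ (filter_subset _ _)

theorem card_filter_not_disjoint_heaviestPerPart_le (hκ : Function.Injective κ) (f : α → β)
    (m : ℕ) (C : Finset (α × α)) (P : Finset β) :
    #{e ∈ heaviestPerPart κ f m C | ¬ Disjoint (edgeParts f e) P} ≤ #P * m := by
  refine le_trans (card_le_card fun e he => ?_)
    (card_biUnion_le_card_mul P (fun p => {e ∈ heaviestPerPart κ f m C | p ∈ edgeParts f e}) m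
      fun p _ => card_filter_mem_edgeParts_heaviestPerPart_le hκ f m C p)
  obtain ⟨heC, hmeet⟩ := mem_filter.1 he
  obtain ⟨p, hpe, hpP⟩ := not_disjoint_iff.1 hmeet
  exact mem_biUnion.2 ⟨p, hpP, mem_filter.2 ⟨heC, hpe⟩⟩

end Truncation

section HeaviestPartMatching

variable {α β Γ : Type*} [DecidableEq β] [AddCommMonoid Γ] [LinearOrder Γ]

/-- `M` has the largest total key among the part matchings for `f` with `k` edges from `E`. -/
structure IsHeaviestPartMatching (κ : α × α → Γ) (f : α → β) (E : Finset (α × α)) (k : ℕ)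
    (M : Finset (α × α)) : Prop where
  subset : M ⊆ E
  card_eq : #M = k
  isPartMatching : IsPartMatching f M
  sum_le : ∀ N ⊆ E, #N = k → IsPartMatching f N → ∑ e ∈ N, κ e ≤ ∑ e ∈ M, κ e

variable {κ : α × α → Γ} {f : α → β} {E C M N : Finset (α × α)} {k m q : ℕ} {e e' : α × α}

theorem exists_isHeaviestPartMatching (κ : α × α → Γ) (hNE : N ⊆ E) (hNk : #N = k)
    (hN : IsPartMatching f N) : ∃ M, IsHeaviestPartMatching κ f E k M := by
  obtain ⟨M, hM, hmax⟩ := exists_max_image {M ∈ E.powersetCard k | IsPartMatching f M}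
    (fun M => ∑ e ∈ M, κ e) ⟨N, mem_filter.2 ⟨mem_powersetCard.2 ⟨hNE, hNk⟩, hN⟩⟩
  obtain ⟨hMEk, hMf⟩ := mem_filter.1 hM
  obtain ⟨hME, hMk⟩ := mem_powersetCard.1 hMEk
  exact ⟨M, hME, hMk, hMf, fun N' hE hk hf =>
    hmax N' (mem_filter.2 ⟨mem_powersetCard.2 ⟨hE, hk⟩, hf⟩)⟩

namespace IsHeaviestPartMatching

theorem card_touchedParts_erase_le [DecidableEq α] (hM : IsHeaviestPartMatching κ f E k M)
    (he : e ∈ M) :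
    #(touchedParts f (M.erase e)) ≤ 2 * (k - 1) := by
  simpa only [card_erase_of_mem he, hM.card_eq] using card_touchedParts_le f (M.erase e)

variable [IsOrderedCancelAddMonoid Γ]

theorem not_disjoint_of_lt [DecidableEq α] (hM : IsHeaviestPartMatching κ f E k M) (he : e ∈ M)
    (he' : e' ∈ E) (hne : f e'.1 ≠ f e'.2) (hlt : κ e < κ e') :
    ¬ Disjoint (edgeParts f e') (touchedParts f (M.erase e)) := by
  intro hdisj
  have hnotMem : e' ∉ M.erase e := fun h =>
    disjoint_left.1 hdisj (mem_edgeParts.2 (.inl rfl))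
      (mem_touchedParts.2 ⟨e', h, mem_edgeParts.2 (.inl rfl)⟩)
  refine (hM.sum_le (insert e' (M.erase e)) ?_ ?_ ?_).not_gt ?_
  · exact insert_subset he' ((erase_subset _ _).trans hM.subset)
  · rw [card_insert_of_notMem hnotMem, card_erase_add_one he, hM.card_eq]
  · exact (hM.isPartMatching.mono (erase_subset _ _)).insert hne hdisj
  · calc ∑ x ∈ M, κ x = κ e + ∑ x ∈ M.erase e, κ x := (add_sum_erase M κ he).symm
      _ < κ e' + ∑ x ∈ M.erase e, κ x := add_lt_add_left hlt _
      _ = ∑ x ∈ insert e' (M.erase e), κ x := (sum_insert hnotMem).symm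

theorem not_lt_of_edgeParts_eq (hM : IsHeaviestPartMatching κ f E k M) (he : e ∈ M) (he' : e' ∈ E)
    (hparts : edgeParts f e' = edgeParts f e) : ¬ κ e < κ e' := fun hlt =>
  hM.not_disjoint_of_lt he he' (ne_of_edgeParts_eq hparts (hM.isPartMatching.1 e he)) hlt
    (hparts ▸ hM.isPartMatching.disjoint_touchedParts_erase he)

theorem subset_heaviestPerPart (hM : IsHeaviestPartMatching κ f E k M) (hMC : M ⊆ C) (hCE : C ⊆ E)
    (hC : ∀ e ∈ C, f e.1 ≠ f e.2) (hinj : Set.InjOn (edgeParts f) C) (hm : 2 * (k - 1) < m) :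
    M ⊆ heaviestPerPart κ f m C := by
  refine fun e he => mem_filter.2 ⟨hMC he, fun p hp => ?_⟩
  refine lt_of_le_of_lt ?_ ((hM.card_touchedParts_erase_le he).trans_lt hm)
  have hpT := disjoint_left.1 (hM.isPartMatching.disjoint_touchedParts_erase he) hp
  refine card_le_of_forall_mem_edgeParts (hinj.mono (filter_subset _ _))
    (fun e' he' => (mem_filter.1 he').2.1) hpT fun e' he' => ?_
  obtain ⟨he'C, -, hlt⟩ := mem_filter.1 he'
  exact hM.not_disjoint_of_lt he (hCE he'C) (hC e' he'C) hlt

theorem subset_heaviest (hM : IsHeaviestPartMatching κ f E k M) (hκ : Function.Injective κ)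
    (hMC : M ⊆ heaviestPerPart κ f m C) (hCE : C ⊆ E) (hC : ∀ e ∈ C, f e.1 ≠ f e.2)
    (hq : 2 * (k - 1) * m < q) : M ⊆ heaviest κ q (heaviestPerPart κ f m C) := by
  refine fun e he => mem_filter.2 ⟨hMC he, ?_⟩
  set T := touchedParts f (M.erase e)
  have hsub : {e' ∈ heaviestPerPart κ f m C | κ e < κ e'} ⊆
      {e' ∈ heaviestPerPart κ f m C | ¬ Disjoint (edgeParts f e') T} := fun e' he' => by
    obtain ⟨he'R, hlt⟩ := mem_filter.1 he'
    have he'C := (mem_filter.1 he'R).1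
    exact mem_filter.2 ⟨he'R, hM.not_disjoint_of_lt he (hCE he'C) (hC e' he'C) hlt⟩
  calc #{e' ∈ heaviestPerPart κ f m C | κ e < κ e'} ≤ #T * m :=
        (card_le_card hsub).trans (card_filter_not_disjoint_heaviestPerPart_le hκ f m C T)
    _ ≤ 2 * (k - 1) * m := Nat.mul_le_mul_right m (hM.card_touchedParts_erase_le he)
    _ < q := hq

end IsHeaviestPartMatching

end HeaviestPartMatching

section EdgeKey

/-- The key `β e = (wt e, e.1, e.2)` with the lexicographic order. As the lexicographic product is
again an ordered cancellative monoid, keys of edge sets can be summed and compared. -/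
def edgeKey (wt : ℕ × ℕ → ℝ) (e : ℕ × ℕ) : ℝ ×ₗ (ℕ ×ₗ ℕ) :=
  toLex (wt e, toLex e)

theorem edgeLT_iff_edgeKey_lt {wt : ℕ × ℕ → ℝ} {e e' : ℕ × ℕ} :
    edgeLT wt e e' ↔ edgeKey wt e < edgeKey wt e' := by
  simp only [edgeLT, edgeKey, Prod.Lex.toLex_lt_toLex]

theorem edgeKey_injective (wt : ℕ × ℕ → ℝ) : Function.Injective (edgeKey wt) := fun _ _ h =>
  toLex.injective (congrArg (fun x => (ofLex x).2) h)

theorem fst_sum_edgeKey (wt : ℕ × ℕ → ℝ) (M : Finset (ℕ × ℕ)) :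
    (ofLex (∑ e ∈ M, edgeKey wt e)).1 = mweight wt M :=
  map_sum ((AddMonoidHom.fst ℝ (ℕ ×ₗ ℕ)).comp (ofLexAddEquiv _).toAddMonoidHom) (edgeKey wt) M

end EdgeKey

section Reduction

variable {f : ℕ → ℕ} {wt : ℕ × ℕ → ℝ} {k : ℕ} {E M : Finset (ℕ × ℕ)}

theorem mem_compactG {e : ℕ × ℕ} : e ∈ CompactG wt f E ↔ e ∈ E ∧ f e.1 ≠ f e.2 ∧
    ∀ e' ∈ E, edgeParts f e' = edgeParts f e → ¬ edgeKey wt e < edgeKey wt e' := by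
  simp only [CompactG, mem_filter, edgeLT_iff_edgeKey_lt, edgeParts]

theorem injOn_edgeParts_compactG : Set.InjOn (edgeParts f) (CompactG wt f E) := by
  intro e he e' he' h
  obtain ⟨heE, -, hmax⟩ := mem_compactG.1 he
  obtain ⟨heE', -, hmax'⟩ := mem_compactG.1 he'
  refine edgeKey_injective wt (le_antisymm ?_ ?_)
  exacts [not_lt.1 (hmax' e heE h), not_lt.1 (hmax e' heE' h.symm)]

theorem redComG_eq_heaviest : RedComG wt f k E =
    heaviest (edgeKey wt) (k * (16 * k - 1))
      (heaviestPerPart (edgeKey wt) f (8 * k) (CompactG wt f E)) := by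
  simp only [RedComG, heaviest, heaviestPerPart, edgeLT_iff_edgeKey_lt, mem_edgeParts,
    forall_eq_or_imp, forall_eq, eq_comm]

theorem IsPartMatching.isMatchingE (hM : IsPartMatching f M) : IsMatchingE M := by
  intro e he e' he' hne
  have hsep : ∀ ⦃p⦄, p ∈ edgeParts f e → p ∉ edgeParts f e' :=
    disjoint_left.1 (hM.2 he he' hne)
  simp only [mem_edgeParts] at hsep
  grind

theorem NiceE.isPartMatching (hf : NiceE f M) (hM : IsMatchingE M) (hloop : ∀ e ∈ M, e.1 ≠ e.2) :
    IsPartMatching f M := by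
  have hfst : ∀ e ∈ M, e.1 ∈ coveredE M := fun e he => ⟨e, he, .inl rfl⟩
  have hsnd : ∀ e ∈ M, e.2 ∈ coveredE M := fun e he => ⟨e, he, .inr rfl⟩
  refine ⟨fun e he => hf.ne (hfst e he) (hsnd e he) (hloop e he), fun e he e' he' hne => ?_⟩
  obtain ⟨h₁₁, h₁₂, h₂₁, h₂₂⟩ := hM e he e' he' hne
  refine disjoint_left.2 fun p hp hp' => ?_
  rcases mem_edgeParts.1 hp with rfl | rfl <;> rcases mem_edgeParts.1 hp' with h | h
  exacts [h₁₁ (hf (hfst e he) (hfst e' he') h), h₁₂ (hf (hfst e he) (hsnd e' he') h),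
    h₂₁ (hf (hsnd e he) (hfst e' he') h), h₂₂ (hf (hsnd e he) (hsnd e' he') h)]

theorem IsHeaviestPartMatching.subset_compactG
    (hM : IsHeaviestPartMatching (edgeKey wt) f E k M) : M ⊆ CompactG wt f E := fun e he =>
  mem_compactG.2 ⟨hM.subset he, hM.isPartMatching.1 e he, fun _ he' =>
    hM.not_lt_of_edgeParts_eq he he'⟩

theorem IsHeaviestPartMatching.subset_redComG
    (hM : IsHeaviestPartMatching (edgeKey wt) f E k M) : M ⊆ RedComG wt f k E := by
  rcases M.eq_empty_or_nonempty with rfl | hne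
  · exact empty_subset _
  have hk : 0 < k := hM.card_eq ▸ hne.card_pos
  have hCE : CompactG wt f E ⊆ E := filter_subset _ _
  have hC : ∀ e ∈ CompactG wt f E, f e.1 ≠ f e.2 := fun e he => (mem_compactG.1 he).2.1
  have hq : 2 * (k - 1) * (8 * k) < k * (16 * k - 1) := by
    rw [mul_comm, mul_comm 8 k, mul_assoc]
    exact Nat.mul_lt_mul_of_pos_left (by lia) hk
  have hMR := hM.subset_heaviestPerPart hM.subset_compactG hCE hC injOn_edgeParts_compactG
    (m := 8 * k) (by lia)
  rw [redComG_eq_heaviest]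
  exact hM.subset_heaviest (edgeKey_injective wt) hMR hCE hC hq

theorem NiceE.exists_isKMatchingE_redComG (hf : NiceE f M) (hM : IsKMatchingE E M k)
    (hloop : ∀ e ∈ M, e.1 ≠ e.2) :
    ∃ N, IsKMatchingE (RedComG wt f k E) N k ∧ mweight wt M ≤ mweight wt N := by
  obtain ⟨hME, hMk, hMmatch⟩ := hM
  have hMf := hf.isPartMatching hMmatch hloop
  obtain ⟨N, hN⟩ := exists_isHeaviestPartMatching (edgeKey wt) hME hMk hMf
  refine ⟨N, ⟨hN.subset_redComG, hN.card_eq, hN.isPartMatching.isMatchingE⟩, ?_⟩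
  rw [← fst_sum_edgeKey, ← fst_sum_edgeKey]
  exact Prod.Lex.monotone_fst_ofLex (hN.sum_le M hME hMk hMf)

theorem exists_isKMatchingE_forall_mweight_le (wt : ℕ × ℕ → ℝ) (hex : ∃ M, IsKMatchingE E M k) :
    ∃ M, IsKMatchingE E M k ∧ ∀ N, IsKMatchingE E N k → mweight wt N ≤ mweight wt M := by
  have hfin : {M | IsKMatchingE E M k}.Finite :=
    E.powerset.finite_toSet.subset fun M hM => mem_coe.2 (mem_powerset.2 hM.1)
  exact Set.exists_max_image _ (mweight wt) hfin hex

theorem coe_touchedParts_id (M : Finset (ℕ × ℕ)) :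
    (touchedParts id M : Set ℕ) = coveredE M := by
  ext v
  simp only [mem_coe, mem_touchedParts, mem_edgeParts, id, coveredE, Set.mem_ofPred_eq]

end Reduction

section Hashing

variable {α β : Type*} [DecidableEq β] {F : Finset (α → β)} {V : Finset α}

theorem two_mul_card_not_injOn_le {c : ℕ}
    (hF : (V : Set α).Pairwise fun x y => #{h ∈ F | h x = h y} ≤ c) :
    2 * #{h ∈ F | ¬ Set.InjOn h V} ≤ #V.offDiag * c := by
  rw [mul_comm]
  refine card_mul_le_card_mul (fun h xy => h xy.1 = h xy.2) (fun h hh => ?_) fun xy hxy => ?_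
  · obtain ⟨x, hx, y, hy, hxy, hne⟩ : ∃ x ∈ V, ∃ y ∈ V, h x = h y ∧ x ≠ y := by
      simpa only [Set.InjOn, mem_coe, not_forall, exists_prop] using (mem_filter.1 hh).2
    refine one_lt_card.2 ⟨(x, y), ?_, (y, x), ?_, fun h => hne (congrArg Prod.fst h)⟩
    · exact mem_filter.2 ⟨mem_offDiag.2 ⟨hx, hy, hne⟩, hxy⟩
    · exact mem_filter.2 ⟨mem_offDiag.2 ⟨hy, hx, hne.symm⟩, hxy.symm⟩
  · obtain ⟨hx, hy, hne⟩ := mem_offDiag.1 hxy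
    exact (card_le_card (filter_subset_filter _ (filter_subset _ _))).trans (hF hx hy hne)

theorem card_le_two_mul_card_injOn {r : ℕ} (hV : #V ^ 2 ≤ r)
    (hF : (V : Set α).Pairwise fun x y => #{h ∈ F | h x = h y} * r ≤ #F) :
    #F ≤ 2 * #{h ∈ F | Set.InjOn h V} := by
  have hcoll : (V : Set α).Pairwise fun x y => #{h ∈ F | h x = h y} ≤ #F / r :=
    fun x hx y hy hne => by
      have hr : 0 < r := (Nat.pow_pos (card_pos.2 ⟨x, hx⟩)).trans_le hV
      exact (Nat.le_div_iff_mul_le hr).2 (hF hx hy hne)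
  have hbad : 2 * #{h ∈ F | ¬ Set.InjOn h V} ≤ #F :=
    calc 2 * #{h ∈ F | ¬ Set.InjOn h V} ≤ #V.offDiag * (#F / r) := two_mul_card_not_injOn_le hcoll
      _ ≤ r * (#F / r) := by
        refine Nat.mul_le_mul_right _ (le_trans ?_ hV)
        rw [offDiag_card, sq]
        exact Nat.sub_le _ _
      _ ≤ #F := Nat.mul_div_le _ _
  have hsplit := card_filter_add_card_filter_not (s := F) fun h => Set.InjOn h V
  lia

end Hashing

theorem stmt11_general (k : ℕ) (wt : ℕ × ℕ → ℝ) (V : Set ℕ) (E : Finset (ℕ × ℕ))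
    (hE : ∀ e ∈ E, e.1 ≠ e.2 ∧ e.1 ∈ V ∧ e.2 ∈ V) (Hfam : Finset (ℕ → ℕ))
    (huniv : V.Pairwise fun x y => #{h ∈ Hfam | h x = h y} * (4 * k ^ 2) ≤ #Hfam)
    (hex : ∃ M, IsKMatchingE E M k) :
    #Hfam ≤ 2 * #{f ∈ Hfam | ∃ M, IsKMatchingE (RedComG wt f k E) M k ∧
      ∀ M', IsKMatchingE E M' k → mweight wt M' ≤ mweight wt M} := by
  obtain ⟨M, hM, hmax⟩ := exists_isKMatchingE_forall_mweight_le wt hex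
  have hcover : (touchedParts id M : Set ℕ) ⊆ V := by
    rw [coe_touchedParts_id]
    rintro _ ⟨e, he, rfl | rfl⟩
    exacts [(hE e (hM.1 he)).2.1, (hE e (hM.1 he)).2.2]
  have hcard : #(touchedParts id M) ^ 2 ≤ 4 * k ^ 2 :=
    calc #(touchedParts id M) ^ 2 ≤ (2 * #M) ^ 2 :=
          Nat.pow_le_pow_left (card_touchedParts_le id M) 2
      _ = 4 * k ^ 2 := by rw [hM.2.1]; ring
  have hhalf := card_le_two_mul_card_injOn hcard (huniv.mono hcover)
  refine hhalf.trans (Nat.mul_le_mul_left 2 (card_le_card (monotone_filter_right _ ?_)))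
  intro f _ hf
  rw [coe_touchedParts_id] at hf
  obtain ⟨N, hN, hMN⟩ := NiceE.exists_isKMatchingE_redComG hf hM fun e he => (hE e (hM.1 he)).1
  exact ⟨N, hN, fun M' hM' => (hmax M' hM').trans hMN⟩

/- **Statement 11.** Let `G` be a simple graph on `{0,…,n-1}` with nonnegative
edge weights, `k ≥ 1`, and `Hfam` a universal family of functions from the
vertex set to `{0,…,4k²-1}`.  If `G` contains a `k`-matching, then for at
least half of the functions `f ∈ Hfam`, `RedComG wt f k G` contains a
`k`-matching whose weight equals the maximum weight of a `k`-matching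
of `G`. -/
theorem stmt11 (n k : ℕ) (hk : 1 ≤ k)
    (wt : ℕ × ℕ → ℝ) (hwt : ∀ e, 0 ≤ wt e)
    (E : Finset (ℕ × ℕ)) (hE : ∀ e ∈ E, e.1 < e.2 ∧ e.2 < n)
    (Hfam : Finset (ℕ → ℕ)) (hHne : Hfam.Nonempty)
    (hrange : ∀ f ∈ Hfam, ∀ v, v < n → f v < 4 * k ^ 2)
    (huniv : ∀ x y : ℕ, x < n → y < n → x ≠ y →
      (Hfam.filter (fun h => h x = h y)).card * (4 * k ^ 2) ≤ Hfam.card)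
    (hex : ∃ M, IsKMatchingE E M k) :
    Hfam.card ≤ 2 * (Hfam.filter (fun f =>
      ∃ M, IsKMatchingE (RedComG wt f k E) M k ∧
        ∀ M', IsKMatchingE E M' k → mweight wt M' ≤ mweight wt M)).card :=
  stmt11_general k wt {v | v < n} E
    (fun e he => ⟨(hE e he).1.ne, (hE e he).1.trans (hE e he).2, (hE e he).2⟩) Hfam
    (fun x hx y hy => huniv x y hx hy) hex
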